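/- arXiv:dg-ga/9709004 — 2 statements merged into one kernel-verified Lean document; each statement's English description precedes it below -/
import Mathlib

section
/- Let 𝔤 be a semisimple Lie algebra of even dimension 2n. Then 𝔤 admits no symplectic form, i.e. there is no closed 2-cochain ω ∈ Λ²𝔤* (with respect to the Chevalley-Eilenberg differential) satisfying ω^n ≠ 0. -/
open scoped TensorProduct

variable {V : Type*} [AddCommGroup V] [Module ℝ V]

noncomputable def wedgeF {k l : ℕ} (f : V [⋀^Fin k]→ₗ[ℝ] ℝ) (g : V [⋀^Fin l]→ₗ[ℝ] ℝ) :
    V [⋀^Fin (k + l)]→ₗ[ℝ] ℝ :=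
  ((TensorProduct.lid ℝ ℝ).toLinearMap.compAlternatingMap (f.domCoprod g)).domDomCongr
    finSumFinEquiv

noncomputable def wpowF (ω : V [⋀^Fin 2]→ₗ[ℝ] ℝ) : (n : ℕ) → V [⋀^Fin (2 * n)]→ₗ[ℝ] ℝ
  | 0 => AlternatingMap.constOfIsEmpty ℝ V (Fin 0) 1
  | n + 1 => wedgeF (wpowF ω n) ω

noncomputable def oneAlt (α : Module.Dual ℝ V) : V [⋀^Fin 1]→ₗ[ℝ] ℝ :=
  AlternatingMap.ofSubsingleton ℝ V ℝ 0 α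

noncomputable def bilinToAlt (B : V →ₗ[ℝ] V →ₗ[ℝ] ℝ) (hB : ∀ x, B x x = 0) :
    V [⋀^Fin 2]→ₗ[ℝ] ℝ where
  toFun v := B (v 0) (v 1)
  map_update_add' := by
    intro _ v i x y
    fin_cases i <;> simp
  map_update_smul' := by
    intro _ v i c x
    fin_cases i <;> simp
  map_eq_zero_of_eq' := by
    intro v i j hij hne
    have h01 : v 0 = v 1 := by
      fin_cases i <;> fin_cases j <;> simp_all
    show B (v 0) (v 1) = 0
    rw [h01]; exact hB _

variable {L : Type*} [LieRing L] [LieAlgebra ℝ L]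

noncomputable def ceD (α : Module.Dual ℝ L) : L [⋀^Fin 2]→ₗ[ℝ] ℝ :=
  bilinToAlt
    (LinearMap.mk₂ ℝ (fun x y => -α ⁅x, y⁆)
      (fun x x' y => by simp [add_lie]; exact add_comm _ _)
      (fun c x y => by simp [smul_lie])
      (fun x y y' => by simp [lie_add]; exact add_comm _ _)
      (fun c x y => by simp [lie_smul]))
    (fun x => by simp)

/-- closedness of a 2-cochain under the Chevalley–Eilenberg differential -/
def IsCEClosed (ω : L [⋀^Fin 2]→ₗ[ℝ] ℝ) : Prop :=
  ∀ x y z : L, ω ![⁅x, y⁆, z] - ω ![⁅x, z⁆, y] + ω ![⁅y, z⁆, x] = 0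

/-!
By the second Whitehead lemma a closed form `ω` on a semisimple Lie algebra is exact. Indeed, with
`κ` the Killing form, closedness says that the endomorphism `D` defined by `κ (D x) y = ω x y` is a
derivation; derivations are inner, so `D = ad a` and `ω x y = κ a ⁅x, y⁆`. If `a ≠ 0`, then `a` lies
in the radical of `ω`, because `ω a y = κ ⁅a, a⁆ y = 0`; if `a = 0`, then `ω = 0`. So `ω` is
degenerate unless the Lie algebra is zero. The radical of `ω` is contained in that of each power
`ω ^ n`, whereas a nonzero alternating form of top degree has no nonzero vector in its radical.
-/

section AltRadical

variable {R M N N₁ N₂ ι ι' : Type*} [CommRing R] [AddCommGroup M] [Module R M]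
  [AddCommGroup N] [Module R N] [AddCommGroup N₁] [Module R N₁] [AddCommGroup N₂] [Module R N₂]

/-- The radical of an alternating map: the vectors that annihilate it when inserted in any slot,
that is, those whose interior product with it vanishes. -/
def altRadical (f : M [⋀^ι]→ₗ[R] N) : Submodule R M where
  carrier := {a | ∀ v, a ∈ Set.range v → f v = 0}
  add_mem' {a b} ha hb := by
    classical
    rintro v ⟨i, hi⟩
    rw [← Function.update_eq_self i v, hi, f.map_update_add,
      ha _ ⟨i, Function.update_self ..⟩, hb _ ⟨i, Function.update_self ..⟩, add_zero]
  zero_mem' := by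
    rintro v ⟨i, hi⟩
    exact f.map_coord_zero i hi
  smul_mem' c a ha := by
    classical
    rintro v ⟨i, hi⟩
    rw [← Function.update_eq_self i v, hi, f.map_update_smul,
      ha _ ⟨i, Function.update_self ..⟩, smul_zero]

theorem altRadical_eq_ker_curryLeft {n : ℕ} (f : M [⋀^Fin (n + 1)]→ₗ[R] N) :
    altRadical f = LinearMap.ker f.curryLeft := by
  ext a
  refine ⟨fun ha ↦ AlternatingMap.ext fun v ↦ ha _ ⟨0, rfl⟩, ?_⟩
  rintro ha v ⟨i, rfl⟩
  have hperm : f (v ∘ Equiv.swap 0 i) = 0 := by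
    rw [← Matrix.cons_head_tail (v ∘ Equiv.swap 0 i)]
    simpa [Matrix.vecHead] using DFunLike.congr_fun ha (Matrix.vecTail (v ∘ Equiv.swap 0 i))
  rwa [f.map_perm, smul_eq_zero_iff_eq] at hperm

theorem altRadical_le_altRadical_compAlternatingMap (g : N →ₗ[R] N₁) (f : M [⋀^ι]→ₗ[R] N) :
    altRadical f ≤ altRadical (g.compAlternatingMap f) := fun a ha v hv ↦ by
  rw [LinearMap.compAlternatingMap_apply, ha v hv, map_zero]

theorem altRadical_le_altRadical_domDomCongr (σ : ι ≃ ι') (f : M [⋀^ι]→ₗ[R] N) :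
    altRadical f ≤ altRadical (f.domDomCongr σ) := fun a ha v hv ↦
  ha _ (by rwa [σ.surjective.range_comp])

theorem altRadical_inf_le_altRadical_domCoprod [Fintype ι] [Fintype ι'] [DecidableEq ι]
    [DecidableEq ι'] (f : M [⋀^ι]→ₗ[R] N₁) (g : M [⋀^ι']→ₗ[R] N₂) :
    altRadical f ⊓ altRadical g ≤ altRadical (f.domCoprod g) := by
  rintro a ⟨haf, hag⟩ v ⟨i, hi⟩
  rw [AlternatingMap.domCoprod_apply, sum_apply]
  refine Finset.sum_eq_zero fun σ _ ↦ ?_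
  induction σ using Quotient.inductionOn' with
  | h σ =>
    have hslot : f (fun j ↦ v (σ (.inl j))) = 0 ∨ g (fun j ↦ v (σ (.inr j))) = 0 := by
      obtain ⟨j | j, rfl⟩ := σ.surjective i
      · exact .inl (haf _ ⟨j, hi⟩)
      · exact .inr (hag _ ⟨j, hi⟩)
    rw [AlternatingMap.domCoprod.summand_mk'']
    rcases hslot with h | h <;> simp [h]

theorem altRadical_eq_bot_of_finrank_eq_card {K E : Type*} [Field K] [AddCommGroup E] [Module K E]
    [FiniteDimensional K E] [Module K N] [Fintype ι] (hι : Module.finrank K E = Fintype.card ι)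
    {f : E [⋀^ι]→ₗ[K] N} (hf : f ≠ 0) : altRadical f = ⊥ := by
  refine (Submodule.eq_bot_iff _).2 fun a ha ↦ by_contra fun ha0 ↦ hf ?_
  have hli : LinearIndepOn K id {a} := LinearIndepOn.singleton ha0
  let b := Module.Basis.extend hli
  have := FiniteDimensional.fintypeBasisIndex b
  let b' := b.reindex (Fintype.equivOfCardEq ((Module.finrank_eq_card_basis b).symm.trans hι))
  have hab : a ∈ Set.range b' := by
    rw [Module.Basis.range_reindex, Module.Basis.range_extend]
    exact hli.subset_extend _ rfl
  refine b'.ext_alternating fun v hv ↦ ha _ ?_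
  rwa [← (Finite.surjective_of_injective hv).range_comp b'] at hab

theorem altRadical_inf_le_altRadical_wedgeF {k l : ℕ} (f : V [⋀^Fin k]→ₗ[ℝ] ℝ)
    (g : V [⋀^Fin l]→ₗ[ℝ] ℝ) : altRadical f ⊓ altRadical g ≤ altRadical (wedgeF f g) :=
  (altRadical_inf_le_altRadical_domCoprod f g).trans <|
    (altRadical_le_altRadical_compAlternatingMap _ _).trans <|
      altRadical_le_altRadical_domDomCongr _ _

theorem altRadical_le_altRadical_wpowF (ω : V [⋀^Fin 2]→ₗ[ℝ] ℝ) (n : ℕ) :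
    altRadical ω ≤ altRadical (wpowF ω n) := by
  induction n with
  | zero => exact fun a _ v ⟨i, _⟩ ↦ i.elim0
  | succ n ih => exact (le_inf ih le_rfl).trans (altRadical_inf_le_altRadical_wedgeF _ ω)

end AltRadical

section Killing

open LieModule.Cohomology

variable {K 𝔤 : Type*} [Field K] [LieRing 𝔤] [LieAlgebra K 𝔤] [FiniteDimensional K 𝔤]
  [LieAlgebra.IsKilling K 𝔤]

theorem exists_lieDerivation_killingForm_eq (c : twoCocycle K 𝔤 (TrivialLieModule K 𝔤 K)) :
    ∃ D : LieDerivation K 𝔤 𝔤,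
      ∀ x y, killingForm K 𝔤 (D x) y = TrivialLieModule.equiv K 𝔤 K (c.1 x y) := by
  have hκ := LieAlgebra.IsKilling.killingForm_nondegenerate K 𝔤
  let D : 𝔤 →ₗ[K] 𝔤 := ((killingForm K 𝔤).toDual hκ).symm.toLinearMap ∘ₗ
    c.1.1.compr₂ (TrivialLieModule.equiv K 𝔤 K).toLinearMap
  have hD (x y : 𝔤) : killingForm K 𝔤 (D x) y = TrivialLieModule.equiv K 𝔤 K (c.1 x y) :=
    LinearMap.BilinForm.apply_toDual_symm_apply (hB := hκ) _ _
  have hleibniz (x y : 𝔤) : D ⁅x, y⁆ = ⁅x, D y⁆ - ⁅y, D x⁆ := by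
    refine ((killingForm K 𝔤).toDual hκ).injective (LinearMap.ext fun z ↦ ?_)
    have hc := (mem_twoCocycle_iff_of_trivial K 𝔤 _ c.1).1 c.2 x y z
    simp only [map_sub, LinearMap.sub_apply, LinearMap.BilinForm.toDual_def,
      LieModule.traceForm_apply_lie_apply', hD, hc, map_add]
    ring
  exact ⟨⟨D, hleibniz⟩, hD⟩

variable (K 𝔤) in
theorem range_d₁₂_eq_twoCocycle :
    LinearMap.range (d₁₂ K 𝔤 (TrivialLieModule K 𝔤 K)) =
      twoCocycle K 𝔤 (TrivialLieModule K 𝔤 K) := by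
  refine le_antisymm (LinearMap.range_le_ker_iff.2 (d₂₃_comp_d₁₂ K 𝔤 _)) fun c hc ↦ ?_
  obtain ⟨D, hD⟩ := exists_lieDerivation_killingForm_eq ⟨c, hc⟩
  obtain ⟨a, rfl⟩ := LieDerivation.IsKilling.exists_eq_ad D
  refine ⟨-(TrivialLieModule.equiv K 𝔤 K).symm.toLinearMap ∘ₗ killingForm K 𝔤 a,
    Subtype.ext (LinearMap.ext₂ fun x y ↦ (TrivialLieModule.equiv K 𝔤 K).injective ?_)⟩
  rw [twoCochain_val_apply, twoCochain_val_apply, d₁₂_apply_apply_ofTrivial, ← hD]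
  simp [LieModule.traceForm_apply_lie_apply]

theorem exists_ne_zero_forall_apply_lie_eq_zero [Nontrivial 𝔤] (α : Module.Dual K 𝔤) :
    ∃ a : 𝔤, a ≠ 0 ∧ ∀ y, α ⁅a, y⁆ = 0 := by
  obtain ⟨a, rfl⟩ := ((killingForm K 𝔤).toDual
    (LieAlgebra.IsKilling.killingForm_nondegenerate K 𝔤)).surjective α
  obtain rfl | ha := eq_or_ne a 0
  · obtain ⟨b, hb⟩ := exists_ne (0 : 𝔤)
    exact ⟨b, hb, fun y ↦ by simp⟩
  · refine ⟨a, ha, fun y ↦ ?_⟩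
    rw [LinearMap.BilinForm.toDual_def, ← LieModule.traceForm_apply_lie_apply, lie_self, map_zero,
      LinearMap.zero_apply]

end Killing

section ChevalleyEilenberg

open LieModule.Cohomology

section TwoCochain

variable {R 𝔤 N : Type*} [CommRing R] [LieRing 𝔤] [LieAlgebra R 𝔤] [AddCommGroup N] [Module R N]

/-- The Lie algebra 2-cochain `(x, y) ↦ ω ![x, y]` of an alternating map in two variables, which
gives access to the coboundary operators `LieModule.Cohomology.d₁₂` and `d₂₃`. -/
def altTwoCochain (ω : 𝔤 [⋀^Fin 2]→ₗ[R] N) : twoCochain R 𝔤 N where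
  val := LinearMap.mk₂ R (fun x y ↦ ω.curryLeft x ![y])
    (fun x x' y ↦ by rw [map_add, AlternatingMap.add_apply])
    (fun c x y ↦ by rw [map_smul, AlternatingMap.smul_apply])
    (fun x ↦ (ω.curryLeft x).toMultilinearMap.cons_add ![])
    (fun c x ↦ (ω.curryLeft x).toMultilinearMap.cons_smul ![] c)
  property x := ω.map_eq_zero_of_eq ![x, x] (i := 0) (j := 1) rfl (by decide)

theorem altTwoCochain_apply (ω : 𝔤 [⋀^Fin 2]→ₗ[R] N) (x y : 𝔤) :
    altTwoCochain ω x y = ω ![x, y] :=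
  rfl

theorem altTwoCochain_mem_twoCocycle_iff [LieRingModule 𝔤 N] [LieModule R 𝔤 N]
    [LieModule.IsTrivial 𝔤 N] (ω : 𝔤 [⋀^Fin 2]→ₗ[R] N) :
    altTwoCochain ω ∈ twoCocycle R 𝔤 N ↔
      ∀ x y z, ω ![⁅x, y⁆, z] - ω ![⁅x, z⁆, y] + ω ![⁅y, z⁆, x] = 0 := by
  rw [mem_twoCocycle_iff_of_trivial]
  refine forall₃_congr fun x y z ↦ ?_
  rw [← twoCochain_skew _ ⁅y, z⁆ x, ← twoCochain_skew _ ⁅x, z⁆ y]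
  simp only [altTwoCochain_apply]
  grind

end TwoCochain

theorem ceD_apply (α : Module.Dual ℝ L) (v : Fin 2 → L) : ceD α v = -α ⁅v 0, v 1⁆ :=
  rfl

variable [FiniteDimensional ℝ L] [LieAlgebra.IsKilling ℝ L]

theorem IsCEClosed.exists_eq_ceD {ω : L [⋀^Fin 2]→ₗ[ℝ] ℝ} (hω : IsCEClosed ω) :
    ∃ α, ω = ceD α := by
  let e := TrivialLieModule.equiv ℝ L ℝ
  let c := altTwoCochain (e.symm.toLinearMap.compAlternatingMap ω)
  have hc : c ∈ twoCocycle ℝ L (TrivialLieModule ℝ L ℝ) :=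
    (altTwoCochain_mem_twoCocycle_iff _).2 fun x y z ↦ by
      simp only [LinearMap.compAlternatingMap_apply, ← map_sub, ← map_add, hω x y z, map_zero]
  obtain ⟨β, hβ⟩ := (range_d₁₂_eq_twoCocycle ℝ L).ge hc
  refine ⟨e.toLinearMap ∘ₗ β, AlternatingMap.ext fun v ↦ ?_⟩
  calc ω v = e (c (v 0) (v 1)) := congrArg ω (funext (Fin.forall_fin_two.2 ⟨rfl, rfl⟩))
    _ = e (-β ⁅v 0, v 1⁆) := by rw [← hβ, d₁₂_apply_apply_ofTrivial]
    _ = ceD (e.toLinearMap ∘ₗ β) v := by rw [map_neg, ceD_apply]; rfl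

theorem altRadical_ceD_ne_bot [Nontrivial L] (α : Module.Dual ℝ L) : altRadical (ceD α) ≠ ⊥ := by
  obtain ⟨a, ha0, ha⟩ := exists_ne_zero_forall_apply_lie_eq_zero α
  refine (Submodule.ne_bot_iff _).2 ⟨a, ?_, ha0⟩
  rw [altRadical_eq_ker_curryLeft, LinearMap.mem_ker]
  ext v
  rw [AlternatingMap.curryLeft_apply_apply, ceD_apply, Matrix.cons_val_zero, ha, neg_zero,
    AlternatingMap.zero_apply]

end ChevalleyEilenberg

/-- a semisimple Lie algebra of dimension 2n admits no symplectic form. -/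
theorem stmt3 [FiniteDimensional ℝ L] [LieAlgebra.IsSemisimple ℝ L] (n : ℕ) (hn : 0 < n)
    (hdim : Module.finrank ℝ L = 2 * n) :
    ¬ ∃ ω : L [⋀^Fin 2]→ₗ[ℝ] ℝ, IsCEClosed ω ∧ wpowF ω n ≠ 0 := by
  rintro ⟨ω, hω, hωn⟩
  have : Nontrivial L := Module.nontrivial_of_finrank_pos (R := ℝ) (by lia)
  obtain ⟨α, rfl⟩ := hω.exists_eq_ceD
  have hbot : altRadical (wpowF (ceD α) n) = ⊥ :=
    altRadical_eq_bot_of_finrank_eq_card (by rw [hdim, Fintype.card_fin]) hωn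
  exact altRadical_ceD_ne_bot α (le_bot_iff.1 (hbot ▸ altRadical_le_altRadical_wpowF _ n))
end

section
/- The Lie algebra sl(2,ℝ) is contact: there exists α ∈ sl(2,ℝ)* with α ∧ dα ≠ 0. Moreover there exist exactly two contact structures up to automorphism: one for which the Killing form restricted to ker α is definite, and one for which it is nondegenerate indefinite; and ker α is a subalgebra if and only if the Killing form restricted to ker α is degenerate. -/
open scoped TensorProduct

variable {V : Type*} [AddCommGroup V] [Module ℝ V]

variable {L : Type*} [LieRing L] [LieAlgebra ℝ L]

noncomputable abbrev sl2Contact (α : Module.Dual ℝ (LieAlgebra.SpecialLinear.sl (Fin 2) ℝ)) :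
    Prop :=
  wedgeF (oneAlt α) (ceD α) ≠ 0

/-- equivalence of contact structures under a Lie algebra automorphism -/
def sl2EquivContact (α β : Module.Dual ℝ (LieAlgebra.SpecialLinear.sl (Fin 2) ℝ)) : Prop :=
  ∃ (f : (LieAlgebra.SpecialLinear.sl (Fin 2) ℝ) ≃ₗ⁅ℝ⁆ (LieAlgebra.SpecialLinear.sl (Fin 2) ℝ))
    (c : ℝ), c ≠ 0 ∧ ∀ x, α (f x) = c * β x

/-!
A form `α` is contact exactly when its kernel is not closed under the bracket (Frobenius). The
Killing form `k` of `sl(2)` is nondegenerate, so `α = k(z, ·)` and `ker α = z^⊥` for a unique `z`,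
and `k` is degenerate on `z^⊥` if and only if `k(z, z) = 0`. The identity
`2 [x, [y, w]] = k(x, y) w - k(x, w) y` shows that `z^⊥` is a subalgebra under the same condition.
Conjugation acts transitively on the nonzero trace-zero matrices with a given value of `k(z, z)`,
and rescaling `α` multiplies this value by a square, so contact structures over `ℝ` are classified
by the sign of `k(z, z)`; a rotation generator and a diagonal matrix represent the two signs.
-/

section Frobenius

-- The `(1, n)`-shuffles are represented by the transpositions moving the distinguished index.
theorem bijective_mk_swap_inl {a : Type*} (ι : Type*) [Subsingleton a] [Finite ι]
    [DecidableEq a] [DecidableEq ι] (i : a) :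
    Function.Bijective fun s : a ⊕ ι ↦
      (Quotient.mk'' (Equiv.swap (Sum.inl i) s) : Equiv.Perm.ModSumCongr a ι) := by
  constructor
  · intro s t hst
    obtain ⟨⟨τ, ρ⟩, hτρ⟩ := QuotientGroup.leftRel_apply.mp (Quotient.exact' hst)
    have h : Equiv.swap (Sum.inl i) s (Equiv.swap (Sum.inl i) t (Sum.inl i)) = Sum.inl i := by
      simpa [Subsingleton.elim (τ i) i] using (DFunLike.congr_fun hτρ (Sum.inl i)).symm
    rwa [Equiv.swap_apply_left, Equiv.swap_apply_eq_iff, Equiv.swap_apply_left, eq_comm] at h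
  · intro q
    induction q using Quotient.inductionOn' with | _ σ
    refine ⟨σ (Sum.inl i), Quotient.sound' (QuotientGroup.leftRel_apply.mpr ?_)⟩
    refine Equiv.Perm.mem_sumCongrHom_range_of_perm_mapsTo_inl ?_
    rintro _ ⟨j, rfl⟩
    exact ⟨i, by simp [Subsingleton.elim j i]⟩

variable (α : Module.Dual ℝ V) (B : V →ₗ[ℝ] V →ₗ[ℝ] ℝ) (hB : ∀ x, B x x = 0)

theorem wedgeF_oneAlt_bilinToAlt_apply (v : Fin 3 → V) :
    wedgeF (oneAlt α) (bilinToAlt B hB) v =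
      α (v 0) * B (v 1) (v 2) - α (v 1) * B (v 0) (v 2) + α (v 2) * B (v 0) (v 1) := by
  let term (s : Fin 1 ⊕ Fin 2) : ℝ := TensorProduct.lid ℝ ℝ
    (AlternatingMap.domCoprod.summand (oneAlt α) (bilinToAlt B hB)
      (Quotient.mk'' (Equiv.swap (Sum.inl 0) s)) (v ∘ finSumFinEquiv))
  have sum_over_shuffles : wedgeF (oneAlt α) (bilinToAlt B hB) v = ∑ s, term s := by
    rw [(bijective_mk_swap_inl (Fin 2) (0 : Fin 1)).sum_comp fun q ↦ TensorProduct.lid ℝ ℝ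
      (AlternatingMap.domCoprod.summand (oneAlt α) (bilinToAlt B hB) q (v ∘ finSumFinEquiv)),
      ← map_sum, ← sum_apply]
    rfl
  have v_inl : v (finSumFinEquiv (Sum.inl (0 : Fin 1) : Fin 1 ⊕ Fin 2)) = v 0 := rfl
  have v_inr_zero : v (finSumFinEquiv (Sum.inr (0 : Fin 2) : Fin 1 ⊕ Fin 2)) = v 1 := rfl
  have v_inr_one : v (finSumFinEquiv (Sum.inr (1 : Fin 2) : Fin 1 ⊕ Fin 2)) = v 2 := rfl
  have term_inl : term (Sum.inl 0) = α (v 0) * B (v 1) (v 2) := by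
    simp [term, AlternatingMap.domCoprod.summand_mk'', oneAlt, bilinToAlt, v_inl, v_inr_zero,
      v_inr_one]
  have term_inr_zero : term (Sum.inr 0) = -(α (v 1) * B (v 0) (v 2)) := by
    simp [term, AlternatingMap.domCoprod.summand_mk'', oneAlt, bilinToAlt,
      Equiv.swap_apply_of_ne_of_ne, v_inl, v_inr_zero, v_inr_one]
  have term_inr_one : term (Sum.inr 1) = α (v 2) * B (v 0) (v 1) := by
    have B_swap : B (v 1) (v 0) = -B (v 0) (v 1) := (LinearMap.IsAlt.neg hB _ _).symm
    simp [term, AlternatingMap.domCoprod.summand_mk'', oneAlt, bilinToAlt,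
      Equiv.swap_apply_of_ne_of_ne, v_inl, v_inr_zero, v_inr_one, B_swap]
  rw [sum_over_shuffles, Fintype.sum_sum_type, Fin.sum_univ_two, Fin.sum_univ_one, term_inl,
    term_inr_zero, term_inr_one]
  ring

variable {α} in
theorem wedgeF_oneAlt_bilinToAlt_eq_zero_iff (hα : α ≠ 0) :
    wedgeF (oneAlt α) (bilinToAlt B hB) = 0 ↔ ∀ x y, α x = 0 → α y = 0 → B x y = 0 := by
  obtain ⟨w, hw⟩ : ∃ w, α w ≠ 0 := DFunLike.ne_iff.mp hα
  constructor
  · intro h x y hx hy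
    have h_eval := wedgeF_oneAlt_bilinToAlt_apply α B hB ![w, x, y]
    simpa [h, hx, hy, hw] using h_eval
  · intro h
    have B_eq (x y : V) : α w * B x y = α y * B x w - α x * B y w := by
      have h_proj := h (α w • x - α x • w) (α w • y - α y • w)
        (by simp [mul_comm]) (by simp [mul_comm])
      have B_swap : B w y = -B y w := (LinearMap.IsAlt.neg hB _ _).symm
      simp only [map_sub, map_smul, LinearMap.sub_apply, LinearMap.smul_apply, smul_eq_mul, hB,
        B_swap] at h_proj
      refine mul_left_cancel₀ hw ?_
      linear_combination h_proj
    ext v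
    refine mul_left_cancel₀ hw ?_
    rw [AlternatingMap.zero_apply, wedgeF_oneAlt_bilinToAlt_apply α B hB v]
    linear_combination α (v 0) * B_eq (v 1) (v 2) - α (v 1) * B_eq (v 0) (v 2) +
      α (v 2) * B_eq (v 0) (v 1)

theorem wedgeF_oneAlt_ceD_eq_zero_iff (α : Module.Dual ℝ L) :
    wedgeF (oneAlt α) (ceD α) = 0 ↔ ∀ x y, α x = 0 → α y = 0 → α ⁅x, y⁆ = 0 := by
  rcases eq_or_ne α 0 with rfl | hα
  · refine iff_of_true (AlternatingMap.ext fun v ↦ ?_) fun _ _ _ _ ↦ rfl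
    exact (wedgeF_oneAlt_bilinToAlt_apply 0 _ _ v).trans (by simp)
  · simp only [ceD, wedgeF_oneAlt_bilinToAlt_eq_zero_iff _ _ hα, LinearMap.mk₂_apply, neg_eq_zero]

end Frobenius

section BilinForm

theorem exists_ne_zero_orthogonal_iff_of_nondegenerate {K E : Type*} [Field K] [AddCommGroup E]
    [Module K E] {B : LinearMap.BilinForm K E} (hB : B.Nondegenerate) (hB' : B.IsRefl) {z : E}
    (hz : z ≠ 0) :
    (∃ x, B z x = 0 ∧ x ≠ 0 ∧ ∀ y, B z y = 0 → B x y = 0) ↔ B z z = 0 := by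
  refine ⟨fun ⟨x, hzx, hx, hxz⟩ ↦ ?_, fun hzz ↦ ⟨z, hzz, hz, fun _ ↦ id⟩⟩
  by_contra hzz
  refine hx (hB.1 x fun y ↦ ?_)
  have h_proj : B z (y - (B z y / B z z) • z) = 0 := by simp [hzz]
  simpa [hB' z x hzx] using hxz _ h_proj

end BilinForm

section Matrix

open Matrix

theorem exists_isUnit_det_mul_eq_mul_companion {K : Type*} [Field K]
    {A : Matrix (Fin 2) (Fin 2) K} (hA : A ∉ Set.range (scalar (Fin 2))) :
    ∃ g : Matrix (Fin 2) (Fin 2) K, IsUnit g.det ∧ A * g = g * !![0, -A.det; 1, A.trace] := by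
  -- `A` has a cyclic vector `v = (u, w)`; the columns of `g` are `v` and `A v`.
  obtain ⟨u, w, huw⟩ : ∃ u w : K,
      u * (A 1 0 * u + A 1 1 * w) - w * (A 0 0 * u + A 0 1 * w) ≠ 0 := by
    by_contra! h
    refine hA ⟨A 0 0, ?_⟩
    have h10 : A 1 0 = 0 := by simpa using h 1 0
    have h01 : A 0 1 = 0 := by simpa using h 0 1
    have h11 : A 1 1 = A 0 0 := by simpa [h10, h01, sub_eq_zero] using h 1 1
    ext i j
    fin_cases i <;> fin_cases j <;> simp [h10, h01, h11]
  refine ⟨!![u, A 0 0 * u + A 0 1 * w; w, A 1 0 * u + A 1 1 * w], ?_, ?_⟩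
  · rw [det_fin_two_of, isUnit_iff_ne_zero]
    convert huw using 1
    ring
  · ext i j
    fin_cases i <;> fin_cases j <;>
      simp only [mul_apply, Fin.sum_univ_two, det_fin_two, trace_fin_two, of_apply, cons_val',
        cons_val_zero, cons_val_one, cons_val_fin_one, Fin.zero_eta, Fin.mk_one] <;> ring

theorem exists_isUnit_det_conj_eq {K : Type*} [Field K] {A A' : Matrix (Fin 2) (Fin 2) K}
    (hA : A ∉ Set.range (scalar (Fin 2))) (hA' : A' ∉ Set.range (scalar (Fin 2)))
    (h_trace : A.trace = A'.trace) (h_det : A.det = A'.det) :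
    ∃ g : Matrix (Fin 2) (Fin 2) K, IsUnit g.det ∧ g * A * g⁻¹ = A' := by
  obtain ⟨p, hp, hpA⟩ := exists_isUnit_det_mul_eq_mul_companion hA
  obtain ⟨q, hq, hqA'⟩ := exists_isUnit_det_mul_eq_mul_companion hA'
  rw [h_trace, h_det] at hpA
  refine ⟨q * p⁻¹, ?_, ?_⟩
  · rw [det_mul]
    exact hq.mul (p.isUnit_nonsing_inv_det hp)
  · rw [Matrix.mul_inv_rev, nonsing_inv_nonsing_inv _ hp]
    calc q * p⁻¹ * A * (p * q⁻¹) = q * (p⁻¹ * (A * p)) * q⁻¹ := by simp only [Matrix.mul_assoc]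
      _ = A' * q * q⁻¹ := by rw [hpA, nonsing_inv_mul_cancel_left _ _ hp, hqA']
      _ = A' := mul_nonsing_inv_cancel_right _ _ hq

end Matrix

section SpecialLinear

open LieAlgebra.SpecialLinear Matrix

attribute [local instance] LieRing.ofAssociativeRing

/-- The automorphism `x ↦ P x P⁻¹` of the Lie algebra of trace-zero matrices; these automorphisms
realize the equivalences between contact forms. -/
noncomputable def slConj {n R : Type*} [Fintype n] [DecidableEq n] [CommRing R] (P : Matrix n n R)
    (hP : IsUnit P.det) : sl n R ≃ₗ⁅R⁆ sl n R :=
  LieEquiv.ofSubalgebras _ _ (P.lieConj (P.invertibleOfIsUnitDet hP)) <| by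
    ext A
    suffices (P⁻¹ * A * P).trace = 0 ↔ A.trace = 0 by
      simp only [LieSubalgebra.mem_map_submodule, ← lieConj_symm_apply P A
        (P.invertibleOfIsUnitDet hP)] at this ⊢
      exact (Submodule.mem_map_equiv (p := (sl n R).toSubmodule)).trans this
    rw [trace_conj' ((isUnit_iff_isUnit_det P).mpr hP)]

theorem coe_slConj_apply {n R : Type*} [Fintype n] [DecidableEq n] [CommRing R] (P : Matrix n n R)
    (hP : IsUnit P.det) (x : sl n R) : (slConj P hP x : Matrix n n R) = P * x * P⁻¹ := by
  rw [slConj, LieEquiv.ofSubalgebras_apply, lieConj_apply]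

section CommRing

variable {R : Type*} [CommRing R]

/-- The trace-zero matrix with rows `(a, b)` and `(c, -a)`, as coordinates on `sl(2)`. -/
def slTwo (a b c : R) : sl (Fin 2) R :=
  ⟨!![a, b; c, -a], LinearMap.mem_ker.mpr (by simp [trace_fin_two])⟩

theorem slTwo_eq_zero_iff {a b c : R} : slTwo a b c = 0 ↔ a = 0 ∧ b = 0 ∧ c = 0 := by
  refine ⟨fun h ↦ ?_, ?_⟩
  · have h_entry (i j : Fin 2) : (slTwo a b c).1 i j = 0 := by rw [h]; rfl
    exact ⟨h_entry 0 0, h_entry 0 1, h_entry 1 0⟩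
  · rintro ⟨rfl, rfl, rfl⟩
    refine Subtype.ext ?_
    ext i j
    fin_cases i <;> fin_cases j <;> simp [slTwo]

theorem exists_eq_slTwo (x : sl (Fin 2) R) : ∃ a b c, x = slTwo a b c := by
  have h_trace : x.1 0 0 + x.1 1 1 = 0 := (trace_fin_two x.1).symm.trans x.2
  refine ⟨x.1 0 0, x.1 0 1, x.1 1 0, Subtype.ext ?_⟩
  rw [eta_fin_two x.1]
  simp [slTwo, eq_neg_of_add_eq_zero_right h_trace]

-- This is the polarization of the Cayley-Hamilton identity `x ^ 2 = -det x`.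
theorem coe_mul_add_coe_mul_sl_two (x y : sl (Fin 2) R) :
    (x * y + y * x : Matrix (Fin 2) (Fin 2) R) = (x * y : Matrix (Fin 2) (Fin 2) R).trace • 1 := by
  obtain ⟨a, b, c, rfl⟩ := exists_eq_slTwo x
  obtain ⟨a', b', c', rfl⟩ := exists_eq_slTwo y
  ext i j
  fin_cases i <;> fin_cases j <;>
    simp only [slTwo, mul_fin_two, trace_fin_two_of, one_fin_two, Matrix.add_apply,
      Matrix.smul_apply, smul_eq_mul, of_apply, cons_val', cons_val_zero, cons_val_one,
      cons_val_fin_one, Fin.zero_eta, Fin.mk_one] <;> ring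

theorem trace_coe_mul_coe_self_sl_two (x : sl (Fin 2) R) :
    (x * x : Matrix (Fin 2) (Fin 2) R).trace = -2 * (x : Matrix (Fin 2) (Fin 2) R).det := by
  obtain ⟨a, b, c, rfl⟩ := exists_eq_slTwo x
  simp only [slTwo, mul_fin_two, trace_fin_two_of, det_fin_two_of]
  ring

theorem lie_lie_sl_two (x y z : sl (Fin 2) R) :
    ⁅x, ⁅y, z⁆⁆ = (2 * (x * y : Matrix (Fin 2) (Fin 2) R).trace) • z -
      (2 * (x * z : Matrix (Fin 2) (Fin 2) R).trace) • y := by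
  have two_trace_smul (u v : sl (Fin 2) R) :
      (2 * (x * u : Matrix (Fin 2) (Fin 2) R).trace) • (v : Matrix (Fin 2) (Fin 2) R) =
        (x * u + u * x) * v + v * (x * u + u * x) := by
    rw [coe_mul_add_coe_mul_sl_two, Matrix.smul_mul, Matrix.mul_smul, Matrix.one_mul,
      Matrix.mul_one, ← add_smul, two_mul]
  refine Subtype.ext ?_
  simp only [sl_bracket, AddSubgroupClass.coe_sub, SetLike.val_smul, two_trace_smul]
  noncomm_ring

end CommRing

section Field

variable {K : Type*} [Field K]

local notation "κ" => killingForm K (sl (Fin 2) K)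

theorem finrank_sl_two : Module.finrank K (sl (Fin 2) K) = 3 := by
  have h_add_one : Module.finrank K (sl (Fin 2) K) + 1 = 4 :=
    (Module.Dual.finrank_ker_add_one_of_ne_zero (f := traceLinearMap (Fin 2) K K)
      (DFunLike.ne_iff.mpr ⟨single 0 0 1, by simp⟩)).trans (by simp [Module.finrank_matrix])
  exact Nat.succ_injective h_add_one

theorem killingForm_sl_two_apply (x y : sl (Fin 2) K) :
    κ x y = 4 * (x * y : Matrix (Fin 2) (Fin 2) K).trace := by
  let φ : Module.Dual K (sl (Fin 2) K) :=
    2 • traceLinearMap (Fin 2) K K ∘ₗ LinearMap.mulLeft K x.1 ∘ₗ (sl (Fin 2) K).incl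
  have ad_comp_ad : LieAlgebra.ad K _ x ∘ₗ LieAlgebra.ad K _ y =
      (2 * (x * y : Matrix (Fin 2) (Fin 2) K).trace) • 1 - φ.smulRight y := by
    ext1 w
    simp [lie_lie_sl_two, φ]
  rw [killingForm_apply_apply, ad_comp_ad, map_sub, map_smul, LinearMap.trace_one,
    LinearMap.trace_smulRight, finrank_sl_two]
  simp only [φ, LinearMap.smul_apply, LinearMap.coe_comp, LieHom.coe_toLinearMap,
    LieSubalgebra.coe_incl, Function.comp_apply, LinearMap.mulLeft_apply, traceLinearMap_apply,
    nsmul_eq_mul, smul_eq_mul]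
  ring

theorem killingForm_slTwo (a b c a' b' c' : K) :
    κ (slTwo a b c) (slTwo a' b' c') = 4 * (2 * a * a' + b * c' + c * b') := by
  rw [killingForm_sl_two_apply]
  simp only [slTwo, mul_fin_two, trace_fin_two_of]
  ring

theorem killingForm_sl_two_self (x : sl (Fin 2) K) :
    κ x x = -8 * (x : Matrix (Fin 2) (Fin 2) K).det := by
  rw [killingForm_sl_two_apply, trace_coe_mul_coe_self_sl_two]
  ring

theorem two_smul_lie_lie_sl_two (x y z : sl (Fin 2) K) :
    (2 : K) • ⁅x, ⁅y, z⁆⁆ = κ x y • z - κ x z • y := by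
  rw [lie_lie_sl_two, smul_sub, smul_smul, smul_smul, killingForm_sl_two_apply,
    killingForm_sl_two_apply]
  ring_nf

variable [NeZero (2 : K)]

theorem nondegenerate_killingForm_sl_two : (κ).Nondegenerate := by
  have two_ne : (2 : K) ≠ 0 := two_ne_zero
  have four_ne : (4 : K) ≠ 0 := by
    rw [show (4 : K) = 2 * 2 by norm_num]; exact mul_ne_zero two_ne two_ne
  refine (LieModule.traceForm_isSymm K _ _).isRefl.nondegenerate_iff_separatingLeft.mpr ?_
  intro x hx
  obtain ⟨a, b, c, rfl⟩ := exists_eq_slTwo x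
  have ha : a = 0 := by simpa [killingForm_slTwo, four_ne, two_ne] using hx (slTwo 1 0 0)
  have hb : b = 0 := by simpa [killingForm_slTwo, four_ne] using hx (slTwo 0 0 1)
  have hc : c = 0 := by simpa [killingForm_slTwo, four_ne] using hx (slTwo 0 1 0)
  exact slTwo_eq_zero_iff.mpr ⟨ha, hb, hc⟩

theorem exists_killingForm_sl_two_eq (α : Module.Dual K (sl (Fin 2) K)) : ∃ z, κ z = α :=
  ⟨(LinearMap.BilinForm.toDual _ nondegenerate_killingForm_sl_two).symm α,
    LinearMap.ext (LinearMap.BilinForm.apply_toDual_symm_apply α)⟩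

theorem killingForm_orthogonal_lie_closed_iff {z : sl (Fin 2) K} (hz : z ≠ 0) :
    (∀ x y, κ z x = 0 → κ z y = 0 → κ z ⁅x, y⁆ = 0) ↔ κ z z = 0 := by
  have two_ne : (2 : K) ≠ 0 := two_ne_zero
  constructor
  · intro h_closed
    by_contra hzz
    obtain ⟨x, hzx, hx⟩ := Submodule.exists_mem_ne_zero_of_ne_bot
      (LinearMap.ker_ne_bot_of_finrank_lt (f := κ z) (by simp [finrank_sl_two]))
    refine hzz ((exists_ne_zero_orthogonal_iff_of_nondegenerate nondegenerate_killingForm_sl_two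
      (LieModule.traceForm_isSymm K _ _).isRefl hz).mp ⟨x, hzx, hx, fun y hzy ↦ ?_⟩)
    have h_lie : κ z ⁅z, y⁆ = 0 := by
      rw [← LieModule.traceForm_apply_lie_apply, lie_self, map_zero, LinearMap.zero_apply]
    have h_lie_lie := congr_arg (κ z) (two_smul_lie_lie_sl_two x z y)
    rw [map_smul, h_closed _ _ hzx h_lie, map_sub, map_smul, map_smul, hzy] at h_lie_lie
    simpa [hzz] using h_lie_lie
  · intro hzz x y hzx hzy
    have z_lie_lie : ⁅z, ⁅x, y⁆⁆ = 0 := by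
      have h := two_smul_lie_lie_sl_two z x y
      rw [hzx, hzy, zero_smul, zero_smul, sub_zero] at h
      exact (smul_eq_zero_iff_right two_ne).mp h
    have h := two_smul_lie_lie_sl_two z z ⁅x, y⁆
    rw [z_lie_lie, lie_zero, smul_zero, hzz, zero_smul, zero_sub, eq_comm, neg_eq_zero] at h
    exact (smul_eq_zero_iff_left hz).mp h

theorem coe_sl_two_notMem_range_scalar {x : sl (Fin 2) K} (hx : x ≠ 0) :
    (x : Matrix (Fin 2) (Fin 2) K) ∉ Set.range (scalar (Fin 2)) := by
  rintro ⟨c, hc⟩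
  have h_trace : (scalar (Fin 2) c).trace = 0 := hc ▸ x.2
  have c_eq : c = 0 := by simpa [trace_fin_two, ← two_mul, two_ne_zero] using h_trace
  exact hx (Subtype.ext (by rw [← hc, c_eq, map_zero]; rfl))

theorem exists_lieEquiv_sl_two_apply_eq {z w : sl (Fin 2) K} (hz : z ≠ 0) (hw : w ≠ 0)
    (h : κ z z = κ w w) : ∃ f : sl (Fin 2) K ≃ₗ⁅K⁆ sl (Fin 2) K, f z = w := by
  have two_ne : (2 : K) ≠ 0 := two_ne_zero
  have h_det : (z : Matrix (Fin 2) (Fin 2) K).det = (w : Matrix (Fin 2) (Fin 2) K).det := by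
    have eight_ne : (-8 : K) ≠ 0 := by
      rw [show (-8 : K) = -2 ^ 3 by norm_num]
      exact neg_ne_zero.mpr (pow_ne_zero 3 two_ne)
    rw [killingForm_sl_two_self, killingForm_sl_two_self] at h
    exact mul_left_cancel₀ eight_ne h
  obtain ⟨g, hg, hgzw⟩ := exists_isUnit_det_conj_eq (coe_sl_two_notMem_range_scalar hz)
    (coe_sl_two_notMem_range_scalar hw) (z.2.trans w.2.symm) h_det
  exact ⟨slConj g hg, Subtype.ext ((coe_slConj_apply g hg z).trans hgzw)⟩

theorem exists_lieEquiv_killingForm_eq_iff {z w : sl (Fin 2) K} (hz : z ≠ 0) (hw : w ≠ 0) {c : K}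
    (hc : c ≠ 0) :
    (∃ f : sl (Fin 2) K ≃ₗ⁅K⁆ sl (Fin 2) K, ∀ x, κ z (f x) = c * κ w x) ↔
      κ z z = c ^ 2 * κ w w := by
  constructor
  · rintro ⟨f, hf⟩
    obtain ⟨u, rfl⟩ : ∃ u, f u = z := ⟨f.symm z, f.apply_symm_apply z⟩
    simp only [LieAlgebra.killingForm_of_equiv_apply] at hf ⊢
    have κ_injective : Function.Injective κ := LinearMap.ker_eq_bot.mp
      (LinearMap.separatingLeft_iff_ker_eq_bot.mp nondegenerate_killingForm_sl_two.1)
    obtain rfl : u = c • w := κ_injective (LinearMap.ext fun x ↦ by simp [hf])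
    simp only [map_smul, LinearMap.smul_apply, smul_eq_mul]
    ring
  · intro h
    obtain ⟨f, hf⟩ := exists_lieEquiv_sl_two_apply_eq hw
      (smul_ne_zero (inv_ne_zero hc) hz) (show κ w w = κ (c⁻¹ • z) (c⁻¹ • z) by
        simp only [map_smul, LinearMap.smul_apply, smul_eq_mul, h]
        field_simp)
    refine ⟨f, fun x ↦ ?_⟩
    rw [← LieAlgebra.killingForm_of_equiv_apply f w x, hf, map_smul, LinearMap.smul_apply,
      smul_eq_mul, mul_inv_cancel_left₀ hc]

end Field

theorem killingForm_sl_two_self_pos_of_orthogonal {K : Type*} [Field K] [LinearOrder K]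
    [IsStrictOrderedRing K] {x : sl (Fin 2) K} (hx : x ≠ 0)
    (h : killingForm K (sl (Fin 2) K) (slTwo 0 1 (-1)) x = 0) :
    0 < killingForm K (sl (Fin 2) K) x x := by
  obtain ⟨a, b, c, rfl⟩ := exists_eq_slTwo x
  obtain rfl : c = b := by simpa [killingForm_slTwo, ← sub_eq_add_neg, sub_eq_zero] using h
  have sq_pos : 0 < a ^ 2 + c ^ 2 := by
    by_contra! h_sq
    have ha : a = 0 := by nlinarith [sq_nonneg c]
    have hc : c = 0 := by nlinarith [sq_nonneg a]
    exact hx (slTwo_eq_zero_iff.mpr ⟨ha, hc, hc⟩)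
  rw [killingForm_slTwo]
  linarith

section Real

local notation "κ" => killingForm ℝ (sl (Fin 2) ℝ)

theorem sl2Contact_killingForm_iff {z : sl (Fin 2) ℝ} : sl2Contact (κ z) ↔ κ z z ≠ 0 := by
  rw [sl2Contact, Ne, wedgeF_oneAlt_ceD_eq_zero_iff]
  rcases eq_or_ne z 0 with rfl | hz
  · simp
  · exact not_congr (by simpa using killingForm_orthogonal_lie_closed_iff hz)

theorem sl2EquivContact_killingForm_iff {z w : sl (Fin 2) ℝ} (hz : κ z z ≠ 0) (hw : κ w w ≠ 0) :
    sl2EquivContact (κ z) (κ w) ↔ 0 < κ z z * κ w w := by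
  have z_ne : z ≠ 0 := by rintro rfl; simp at hz
  have w_ne : w ≠ 0 := by rintro rfl; simp at hw
  constructor
  · rintro ⟨f, c, hc, hf⟩
    rw [(exists_lieEquiv_killingForm_eq_iff z_ne w_ne hc).mp ⟨f, hf⟩]
    have : 0 < c ^ 2 * κ w w ^ 2 := by positivity
    linarith
  · intro h
    have h_div : 0 < κ z z / κ w w := div_pos_iff.mpr (mul_pos_iff.mp h)
    have hc := (Real.sqrt_pos.mpr h_div).ne'
    obtain ⟨f, hf⟩ := (exists_lieEquiv_killingForm_eq_iff z_ne w_ne hc).mpr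
      (by rw [Real.sq_sqrt h_div.le, div_mul_cancel₀ _ hw])
    exact ⟨f, _, hc, hf⟩

end Real

end SpecialLinear

/-- contact structures on sl(2,ℝ). -/
theorem stmt8 :
    letI L := LieAlgebra.SpecialLinear.sl (Fin 2) ℝ
    letI k := killingForm ℝ L
    (∃ α : Module.Dual ℝ L, sl2Contact α) ∧
    (∃ α₁ α₂ : Module.Dual ℝ L, sl2Contact α₁ ∧ sl2Contact α₂ ∧
      (∀ x, α₁ x = 0 → x ≠ 0 → 0 < k x x) ∧
      ((∃ x, α₂ x = 0 ∧ k x x < 0) ∧ (∃ x, α₂ x = 0 ∧ 0 < k x x) ∧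
        (∀ x, α₂ x = 0 → (∀ y, α₂ y = 0 → k x y = 0) → x = 0)) ∧
      ¬ sl2EquivContact α₁ α₂ ∧
      (∀ α, sl2Contact α → sl2EquivContact α α₁ ∨ sl2EquivContact α α₂)) ∧
    (∀ α : Module.Dual ℝ L, α ≠ 0 →
      ((∀ x y, α x = 0 → α y = 0 → α ⁅x, y⁆ = 0) ↔
        ∃ x, α x = 0 ∧ x ≠ 0 ∧ ∀ y, α y = 0 → k x y = 0)) := by
  have degenerate_iff {z} (hz : z ≠ 0) := exists_ne_zero_orthogonal_iff_of_nondegenerate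
    (nondegenerate_killingForm_sl_two (K := ℝ)) (LieModule.traceForm_isSymm ℝ _ _).isRefl hz
  have J_neg : killingForm ℝ _ (slTwo 0 1 (-1) : LieAlgebra.SpecialLinear.sl (Fin 2) ℝ)
    (slTwo 0 1 (-1)) < 0 := by norm_num [killingForm_slTwo]
  have H_pos : 0 < killingForm ℝ _ (slTwo 1 0 0 : LieAlgebra.SpecialLinear.sl (Fin 2) ℝ)
    (slTwo 1 0 0) := by norm_num [killingForm_slTwo]
  have J_contact := sl2Contact_killingForm_iff.mpr J_neg.ne
  have H_contact := sl2Contact_killingForm_iff.mpr H_pos.ne'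
  refine ⟨⟨_, J_contact⟩, ⟨_, _, J_contact, H_contact,
    fun x hx hx0 ↦ killingForm_sl_two_self_pos_of_orthogonal hx0 hx,
    ⟨⟨slTwo 0 1 (-1), by simp [killingForm_slTwo], J_neg⟩,
      ⟨slTwo 0 1 1, by simp [killingForm_slTwo], by norm_num [killingForm_slTwo]⟩,
      fun x hx hxy ↦ ?_⟩, ?_, fun α hα ↦ ?_⟩, fun α hα ↦ ?_⟩
  · by_contra hx0
    exact H_pos.ne' ((degenerate_iff (by rintro h; simp [h] at H_pos)).mp ⟨x, hx, hx0, hxy⟩)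
  · rw [sl2EquivContact_killingForm_iff J_neg.ne H_pos.ne']
    exact (mul_neg_of_neg_of_pos J_neg H_pos).not_gt
  · obtain ⟨z, rfl⟩ := exists_killingForm_sl_two_eq α
    have hz := sl2Contact_killingForm_iff.mp hα
    rw [sl2EquivContact_killingForm_iff hz J_neg.ne, sl2EquivContact_killingForm_iff hz H_pos.ne']
    exact hz.lt_or_gt.imp (mul_pos_of_neg_of_neg · J_neg) (mul_pos · H_pos)
  · obtain ⟨z, rfl⟩ := exists_killingForm_sl_two_eq α
    have hz : z ≠ 0 := by rintro rfl; simp at hα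
    exact (killingForm_orthogonal_lie_closed_iff hz).trans (degenerate_iff hz).symm
end
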